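/- Fix S > 0 and an integer k ≥ 1. For M ≥ 2 define c_M = √(2S log M) − S and A_M(x) = exp(−2kM(1 − Φ(x/√S))) for x ≥ c_M, A_M(x) = 0 for x < c_M. Then for every θ₁ > 0 and θ₂ > 0 there exist constants c₁, c₂ > 0 such that for all M ≥ 2 and all w > 0, sup_{x∈ℝ} (A_M(x + w) − A_M(x)) ≤ c₁ M^{θ₁} w + c₂ M^{−θ₂}. -/

import Mathlib

open MeasureTheory ProbabilityTheory Set

/-- The standard normal distribution function `Φ`. -/
noncomputable def stdNormalCDF (x : ℝ) : ℝ :=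
  ((gaussianReal 0 1) (Set.Iic x)).toReal

/-- The accompanying law with parameters `S > 0`, `k ≥ 1`:
`A_M(x) = exp(−2kM(1−Φ(x/√S)))` for `x ≥ c_M = √(2S log M) − S`, `A_M(x) = 0` otherwise. -/
noncomputable def accLawGen (S : ℝ) (k M : ℕ) (x : ℝ) : ℝ :=
  if x < Real.sqrt (2 * S * Real.log M) - S then 0
  else Real.exp (-(2 * (k : ℝ) * (M : ℝ) * (1 - stdNormalCDF (x / Real.sqrt S))))

/-!
Put `S = s²` and `M = exp (b² / 2)`, so that in the variable `u = x / s` the cut-off `c_M` sits at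
`b - s`, a fixed distance below the level `b` at which the normal density times `M` is of order
one. To the right of `b - s` the density times `M` is at most `exp (s * b)`, which is subpolynomial
in `M` since `b` is of order `√(log M)`; this is the Lipschitz part of the bound. At the cut-off
itself `M (1 - Φ(b - s))` is still at least a constant times `exp (s * b / 2)`, which dominates
every multiple of `b²`, i.e. of `log M`; hence the jump there is `O(M ^ (-θ))` for every `θ`.
-/

open Real

section StdNormalCDF

variable {a b C δ u v y : ℝ}

lemma stdNormalCDF_eq_cdf (x : ℝ) : stdNormalCDF x = cdf (gaussianReal 0 1) x :=
  (cdf_eq_real _ x).symm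

lemma stdNormalCDF_le_one (x : ℝ) : stdNormalCDF x ≤ 1 :=
  stdNormalCDF_eq_cdf x ▸ cdf_le_one _ x

lemma stdNormalCDF_mono : Monotone stdNormalCDF := fun x y hxy ↦ by
  simpa only [stdNormalCDF_eq_cdf] using monotone_cdf (gaussianReal 0 1) hxy

lemma gaussianPDFReal_zero_one (y : ℝ) :
    gaussianPDFReal 0 1 y = (√(2 * π))⁻¹ * exp (-(y ^ 2 / 2)) := by
  simp [gaussianPDFReal, neg_div]

lemma stdNormalCDF_sub_eq_integral (hab : a ≤ b) :
    stdNormalCDF b - stdNormalCDF a = ∫ y in a..b, gaussianPDFReal 0 1 y := by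
  have hIoc : stdNormalCDF b - stdNormalCDF a = (gaussianReal 0 1).real (Ioc a b) := by
    rw [← Iic_sdiff_Iic, measureReal_sdiff (Iic_subset_Iic.2 hab) measurableSet_Iic]
    rfl
  rw [hIoc, measureReal_def, gaussianReal_apply_eq_integral 0 one_ne_zero, ENNReal.toReal_ofReal
    (integral_nonneg (gaussianPDFReal_nonneg 0 1)), intervalIntegral.integral_of_le hab]

lemma stdNormalCDF_sub_le (hab : a ≤ b) (hC : ∀ y ∈ Icc a b, gaussianPDFReal 0 1 y ≤ C) :
    stdNormalCDF b - stdNormalCDF a ≤ C * (b - a) := by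
  rw [stdNormalCDF_sub_eq_integral hab, mul_comm, ← smul_eq_mul,
    ← intervalIntegral.integral_const]
  exact intervalIntegral.integral_mono_on hab (integrable_gaussianPDFReal 0 1).intervalIntegrable
    intervalIntegrable_const hC

lemma le_stdNormalCDF_sub (hab : a ≤ b) (hC : ∀ y ∈ Icc a b, C ≤ gaussianPDFReal 0 1 y) :
    C * (b - a) ≤ stdNormalCDF b - stdNormalCDF a := by
  rw [stdNormalCDF_sub_eq_integral hab, mul_comm, ← smul_eq_mul,
    ← intervalIntegral.integral_const]
  exact intervalIntegral.integral_mono_on hab intervalIntegrable_const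
    (integrable_gaussianPDFReal 0 1).intervalIntegrable hC

lemma gaussianPDFReal_le_exp_of_sub_le (hb : 0 ≤ b) (hy : b - δ ≤ y) :
    gaussianPDFReal 0 1 y ≤ exp (δ * b - b ^ 2 / 2) := by
  have hnorm : (√(2 * π))⁻¹ ≤ 1 :=
    inv_le_one_of_one_le₀ (one_le_sqrt.2 (by linarith [pi_gt_three]))
  -- The parabola `y ↦ y²` lies above its tangent at `b`.
  have htangent : b ^ 2 - 2 * δ * b ≤ y ^ 2 := by
    nlinarith [sq_nonneg (y - b), mul_le_mul_of_nonneg_left hy hb]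
  calc gaussianPDFReal 0 1 y = (√(2 * π))⁻¹ * exp (-(y ^ 2 / 2)) := gaussianPDFReal_zero_one y
    _ ≤ exp (-(y ^ 2 / 2)) := mul_le_of_le_one_left (exp_pos _).le hnorm
    _ ≤ exp (δ * b - b ^ 2 / 2) := exp_le_exp.2 (by linarith)

lemma le_gaussianPDFReal_of_mem_Icc (hb : 0 ≤ b) (hδ : 0 ≤ δ)
    (hy : y ∈ Icc (b - δ) (b - δ / 2)) :
    (√(2 * π))⁻¹ * exp (δ / 2 * b - δ ^ 2 / 2 - b ^ 2 / 2) ≤ gaussianPDFReal 0 1 y := by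
  rw [gaussianPDFReal_zero_one]
  have hsq : (b - y) ^ 2 ≤ δ ^ 2 :=
    pow_le_pow_left₀ (by linarith [hy.2]) (by linarith [hy.1]) 2
  gcongr
  nlinarith [mul_le_mul_of_nonneg_left hy.2 hb]

lemma exp_mul_stdNormalCDF_sub_le (hb : 0 ≤ b) (hu : b - δ ≤ u) (huv : u ≤ v) :
    exp (b ^ 2 / 2) * (stdNormalCDF v - stdNormalCDF u) ≤ exp (δ * b) * (v - u) := by
  calc exp (b ^ 2 / 2) * (stdNormalCDF v - stdNormalCDF u)
      ≤ exp (b ^ 2 / 2) * (exp (δ * b - b ^ 2 / 2) * (v - u)) := by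
        gcongr
        exact stdNormalCDF_sub_le huv fun y hy ↦
          gaussianPDFReal_le_exp_of_sub_le hb (hu.trans hy.1)
    _ = exp (δ * b) * (v - u) := by
        rw [← mul_assoc, ← exp_add, add_sub_cancel]

lemma exists_mul_exp_le_exp_mul_one_sub_stdNormalCDF (hδ : 0 < δ) :
    ∃ D > 0, ∀ b, 0 ≤ b →
      D * exp (δ / 2 * b) ≤ exp (b ^ 2 / 2) * (1 - stdNormalCDF (b - δ)) := by
  refine ⟨(√(2 * π))⁻¹ * exp (-(δ ^ 2 / 2)) * (δ / 2), by positivity, fun b hb ↦ ?_⟩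
  have hincr := le_stdNormalCDF_sub (by linarith) fun y ↦ le_gaussianPDFReal_of_mem_Icc hb hδ.le
  calc (√(2 * π))⁻¹ * exp (-(δ ^ 2 / 2)) * (δ / 2) * exp (δ / 2 * b)
      = exp (b ^ 2 / 2) * ((√(2 * π))⁻¹ * exp (δ / 2 * b - δ ^ 2 / 2 - b ^ 2 / 2)
          * (b - δ / 2 - (b - δ))) := by
        rw [sub_eq_add_neg (δ / 2 * b), exp_sub, exp_add]
        field_simp
        ring
    _ ≤ exp (b ^ 2 / 2) * (stdNormalCDF (b - δ / 2) - stdNormalCDF (b - δ)) := by gcongr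
    _ ≤ exp (b ^ 2 / 2) * (1 - stdNormalCDF (b - δ)) := by
        gcongr
        exact stdNormalCDF_le_one _

end StdNormalCDF

section ElementaryInequalities

variable {p q a b c D θ : ℝ}

lemma exp_neg_sub_exp_neg_le (hp : 0 ≤ p) (hpq : p ≤ q) : exp (-p) - exp (-q) ≤ q - p := by
  calc exp (-p) - exp (-q) = exp (-p) * (1 - exp (-(q - p))) := by
        rw [mul_sub, mul_one, ← exp_add]
        ring_nf
    _ ≤ exp (-p) * (q - p) := by
        gcongr exp (-p) * ?_
        linarith [one_sub_le_exp_neg (q - p)]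
    _ ≤ q - p := mul_le_of_le_one_left (sub_nonneg.2 hpq) (exp_le_one_iff.2 (neg_nonpos.2 hp))

lemma mul_sq_le_cube_add_cube (hb : 0 ≤ b) (hc : 0 ≤ c) : c * b ^ 2 ≤ b ^ 3 + c ^ 3 := by
  nlinarith [mul_nonneg (add_nonneg hb hc) (sq_nonneg (b - c)), mul_nonneg hb (sq_nonneg c)]

lemma exists_mul_sq_le_mul_exp_add (hD : 0 < D) (ha : 0 < a) (p : ℝ) :
    ∃ C, ∀ b, 0 ≤ b → p * b ^ 2 ≤ D * exp (a * b) + C := by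
  set E := D * a ^ 3 / 6 with hE
  have hE_pos : 0 < E := by positivity
  refine ⟨E * (|p| / E) ^ 3, fun b hb ↦ ?_⟩
  have hcube : (a * b) ^ 3 / 6 ≤ exp (a * b) := by
    simpa [Nat.factorial] using pow_div_factorial_le_exp (a * b) (by positivity) 3
  calc p * b ^ 2 ≤ |p| * b ^ 2 := by gcongr; exact le_abs_self p
    _ = E * (|p| / E * b ^ 2) := by field_simp
    _ ≤ E * (b ^ 3 + (|p| / E) ^ 3) := by
        gcongr
        exact mul_sq_le_cube_add_cube hb (by positivity)
    _ = D * ((a * b) ^ 3 / 6) + E * (|p| / E) ^ 3 := by rw [hE]; ring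
    _ ≤ D * exp (a * b) + E * (|p| / E) ^ 3 := by gcongr

lemma exp_mul_le_exp_mul_rpow (hθ : 0 < θ) (δ b : ℝ) :
    exp (δ * b) ≤ exp (δ ^ 2 / (2 * θ)) * exp (b ^ 2 / 2) ^ θ := by
  have hyoung : δ ^ 2 / (2 * θ) + b ^ 2 / 2 * θ - δ * b = (δ - θ * b) ^ 2 / (2 * θ) := by
    field_simp
    ring
  rw [← exp_mul, ← exp_add, exp_le_exp, ← sub_nonneg, hyoung]
  positivity

lemma indicator_Ici_sub_le {F : ℝ → ℝ} {c L ε w : ℝ} (hL : 0 ≤ L) (hw : 0 ≤ w)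
    (hF : ∀ u v, c ≤ u → u ≤ v → F v - F u ≤ L * (v - u)) (hε : 0 ≤ ε) (hc : F c ≤ ε) (x : ℝ) :
    (Ici c).indicator F (x + w) - (Ici c).indicator F x ≤ L * w + ε := by
  have hLw : 0 ≤ L * w := mul_nonneg hL hw
  rcases lt_or_ge (x + w) c with hxw | hxw
  · rw [indicator_of_notMem (notMem_Ici.2 hxw), indicator_of_notMem (notMem_Ici.2 (by linarith))]
    linarith
  rw [indicator_of_mem (mem_Ici.2 hxw)]
  rcases lt_or_ge x c with hx | hx
  · rw [indicator_of_notMem (notMem_Ici.2 hx)]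
    have hstep : L * (x + w - c) ≤ L * w := by gcongr; linarith
    linarith [hF c (x + w) le_rfl hxw]
  · rw [indicator_of_mem (mem_Ici.2 hx)]
    have hstep := hF x (x + w) hx (by linarith)
    rw [add_sub_cancel_left] at hstep
    linarith

end ElementaryInequalities

/-- The distribution function of the largest of a Poisson number, of mean `L`, of independent
standard normal variables. It is the accompanying law before truncation, in the standardised
variable `u = x / √S`. -/
noncomputable def poissonMaxCDF (L u : ℝ) : ℝ :=
  exp (-(L * (1 - stdNormalCDF u)))

section PoissonMaxCDF

variable {K b δ u v : ℝ}

lemma poissonMaxCDF_sub_le (hK : 0 ≤ K) (hb : 0 ≤ b) (hu : b - δ ≤ u) (huv : u ≤ v) :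
    poissonMaxCDF (K * exp (b ^ 2 / 2)) v - poissonMaxCDF (K * exp (b ^ 2 / 2)) u
      ≤ K * exp (δ * b) * (v - u) := by
  set L := K * exp (b ^ 2 / 2) with hL
  have hL_nonneg : 0 ≤ L := by positivity
  calc poissonMaxCDF L v - poissonMaxCDF L u
      ≤ L * (1 - stdNormalCDF u) - L * (1 - stdNormalCDF v) := by
        refine exp_neg_sub_exp_neg_le
          (mul_nonneg hL_nonneg (sub_nonneg.2 (stdNormalCDF_le_one v))) ?_
        gcongr
        exact stdNormalCDF_mono huv
    _ = K * (exp (b ^ 2 / 2) * (stdNormalCDF v - stdNormalCDF u)) := by rw [hL]; ring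
    _ ≤ K * (exp (δ * b) * (v - u)) := by
        gcongr K * ?_
        exact exp_mul_stdNormalCDF_sub_le hb hu huv
    _ = K * exp (δ * b) * (v - u) := (mul_assoc _ _ _).symm

lemma exists_poissonMaxCDF_le_mul_rpow (hK : 0 < K) (hδ : 0 < δ) (θ : ℝ) :
    ∃ C > 0, ∀ b, 0 ≤ b →
      poissonMaxCDF (K * exp (b ^ 2 / 2)) (b - δ) ≤ C * exp (b ^ 2 / 2) ^ (-θ) := by
  obtain ⟨D, hD, htail⟩ := exists_mul_exp_le_exp_mul_one_sub_stdNormalCDF hδ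
  obtain ⟨C, hC⟩ := exists_mul_sq_le_mul_exp_add (mul_pos hK hD) (half_pos hδ) (θ / 2)
  refine ⟨exp C, exp_pos C, fun b hb ↦ ?_⟩
  rw [poissonMaxCDF, ← exp_mul, ← exp_add, exp_le_exp]
  linarith [hC b hb, mul_le_mul_of_nonneg_left (htail b hb) hK.le]

end PoissonMaxCDF

/-- The accompanying law `accLawGen` with real instead of natural parameters `κ` and `M`. -/
noncomputable def accLaw (S κ M : ℝ) : ℝ → ℝ :=
  (Ici (√(2 * S * log M) - S)).indicator fun x ↦ poissonMaxCDF (2 * κ * M) (x / √S)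

lemma accLawGen_eq_accLaw (S : ℝ) (k M : ℕ) : accLawGen S k M = accLaw S k M := by
  ext x
  simp only [accLawGen, accLaw, poissonMaxCDF, indicator_apply, mem_Ici, ← not_lt, ite_not]

lemma accLaw_sq_exp {s b : ℝ} (hs : 0 ≤ s) (hb : 0 ≤ b) (κ : ℝ) :
    accLaw (s ^ 2) κ (exp (b ^ 2 / 2)) =
      (Ici (s * (b - s))).indicator fun x ↦ poissonMaxCDF (2 * κ * exp (b ^ 2 / 2)) (x / s) := by
  have hcut : √(2 * s ^ 2 * log (exp (b ^ 2 / 2))) - s ^ 2 = s * (b - s) := by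
    rw [log_exp, show 2 * s ^ 2 * (b ^ 2 / 2) = (s * b) ^ 2 by ring, sqrt_sq (by positivity)]
    ring
  rw [accLaw, hcut, sqrt_sq hs]

lemma exists_exp_sq_div_two_eq {M : ℝ} (hM : 1 ≤ M) : ∃ b, 0 ≤ b ∧ exp (b ^ 2 / 2) = M := by
  refine ⟨√(2 * log M), sqrt_nonneg _, ?_⟩
  rw [sq_sqrt (mul_nonneg zero_le_two (log_nonneg hM)), mul_div_cancel_left₀ _ two_ne_zero,
    exp_log (by linarith)]

theorem statement15_general {S κ θ₁ : ℝ} (hS : 0 < S) (hκ : 0 < κ) (hθ₁ : 0 < θ₁) (θ₂ : ℝ) :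
    ∃ c₁ > 0, ∃ c₂ > 0, ∀ M : ℝ, 1 ≤ M → ∀ w, 0 ≤ w → ∀ x,
      accLaw S κ M (x + w) - accLaw S κ M x ≤ c₁ * M ^ θ₁ * w + c₂ * M ^ (-θ₂) := by
  obtain ⟨s, hs, rfl⟩ : ∃ s, 0 < s ∧ s ^ 2 = S := ⟨√S, sqrt_pos.2 hS, sq_sqrt hS.le⟩
  obtain ⟨C, hC, hjump⟩ := exists_poissonMaxCDF_le_mul_rpow (mul_pos two_pos hκ) hs θ₂
  refine ⟨2 * κ * exp (s ^ 2 / (2 * θ₁)) / s, by positivity, C, hC, fun M hM w hw x ↦ ?_⟩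
  obtain ⟨b, hb, rfl⟩ := exists_exp_sq_div_two_eq hM
  rw [accLaw_sq_exp hs.le hb]
  refine indicator_Ici_sub_le (by positivity) hw (fun u v hu huv ↦ ?_) (by positivity) ?_ x
  · calc _ ≤ 2 * κ * exp (s * b) * (v / s - u / s) :=
          poissonMaxCDF_sub_le (by positivity) hb ((le_div_iff₀' hs).2 hu) (by gcongr)
      _ ≤ 2 * κ * (exp (s ^ 2 / (2 * θ₁)) * exp (b ^ 2 / 2) ^ θ₁) * (v / s - u / s) := by
          gcongr
          · rw [sub_nonneg]; gcongr
          · exact exp_mul_le_exp_mul_rpow hθ₁ s b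
      _ = _ := by ring
  · rw [mul_div_cancel_left₀ _ hs.ne']
    exact hjump b hb

/-- technical Lemma T. For every `θ₁, θ₂ > 0` there exist
`c₁, c₂ > 0` such that for all `M ≥ 2` and `w > 0`,
`sup_{x∈ℝ} (A_M(x+w) − A_M(x)) ≤ c₁ M^{θ₁} w + c₂ M^{−θ₂}`. -/
theorem statement15
    (S : ℝ) (hS : 0 < S) (k : ℕ) (hk : 1 ≤ k) (θ₁ θ₂ : ℝ)
    (hθ₁ : 0 < θ₁) (hθ₂ : 0 < θ₂) :
    ∃ c₁ > (0:ℝ), ∃ c₂ > (0:ℝ), ∀ M : ℕ, 2 ≤ M → ∀ w : ℝ, 0 < w → ∀ x : ℝ,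
      accLawGen S k M (x + w) - accLawGen S k M x
        ≤ c₁ * (M : ℝ) ^ θ₁ * w + c₂ * (M : ℝ) ^ (-θ₂) := by
  obtain ⟨c₁, hc₁, c₂, hc₂, hbound⟩ :=
    statement15_general (κ := k) hS (by exact_mod_cast hk) hθ₁ θ₂
  exact ⟨c₁, hc₁, c₂, hc₂, fun M hM w hw ↦
    accLawGen_eq_accLaw S k M ▸ hbound M (by exact_mod_cast one_le_two.trans hM) w hw.le⟩
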